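/- There exists a constant C > 0 with the following property. Let T := [a₁, a₁+h_x] × [a₂, a₂+h_y] be an axis-aligned rectangle with h_x, h_y > 0, and let v be of class C³ on an open neighbourhood of T. Let v^I be the unique polynomial of degree at most 2 in each variable that agrees with v at the nine nodes (a₁ + i·h_x/2, a₂ + j·h_y/2), i, j ∈ {0,1,2}. Then ( ∫_{a₂}^{a₂+h_y} ( |∂_x(v - v^I)(a₁,y)|² + |∂_x(v - v^I)(a₁+h_x,y)|² ) dy )^{1/2} ≤ C · ( h_x^{3/2} ‖∂_x³ v‖_{L²(T)} + h_x^{1/2} h_y ‖∂_x²∂_y v‖_{L²(T)} + h_y² h_x^{-1/2} ‖∂_x∂_y² v‖_{L²(T)} ). -/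

import Mathlib

open MeasureTheory
open scoped ENNReal

/-- Partial derivative in the first (`x`) coordinate. -/
noncomputable def pdx (f : ℝ × ℝ → ℝ) : ℝ × ℝ → ℝ := fun q => deriv (fun t => f (t, q.2)) q.1

/-- Partial derivative in the second (`y`) coordinate. -/
noncomputable def pdy (f : ℝ × ℝ → ℝ) : ℝ × ℝ → ℝ := fun q => deriv (fun t => f (q.1, t)) q.2

/-- `Dm (α₁, α₂) f = ∂_x^{α₁} ∂_y^{α₂} f`. -/
noncomputable def Dm (a : ℕ × ℕ) (f : ℝ × ℝ → ℝ) : ℝ × ℝ → ℝ := pdx^[a.1] (pdy^[a.2] f)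

/-- The `L^p` norm over a set `R ⊆ ℝ²` (with respect to Lebesgue measure). -/
noncomputable def LpN (p : ℝ≥0∞) (R : Set (ℝ × ℝ)) (f : ℝ × ℝ → ℝ) : ℝ≥0∞ :=
  eLpNorm f p (volume.restrict R)

/-- The reference square `Λ := [-1,1]²`. -/
def Lam : Set (ℝ × ℝ) := Set.Icc (-1, -1) (1, 1)

/-- The `L²` norm over a set `R ⊆ ℝ²`, as a real number `(∫_R f²)^{1/2}`. -/
noncomputable def L2R (R : Set (ℝ × ℝ)) (f : ℝ × ℝ → ℝ) : ℝ :=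
  Real.sqrt (∫ z in R, (f z) ^ 2)

/-- On an open set, `pdx` is the Fréchet derivative in direction `(1,0)`. -/
lemma pdx_hasDerivAt {f : ℝ × ℝ → ℝ} {U : Set (ℝ × ℝ)} (hU : IsOpen U) {n : WithTop ℕ∞}
    (hn : n ≠ 0) (hf : ContDiffOn ℝ n f U) {x y : ℝ} (hz : (x, y) ∈ U) :
    HasDerivAt (fun t => f (t, y)) (pdx f (x, y)) x ∧ pdx f (x, y) = fderiv ℝ f (x, y) (1, 0) := by
  have hd : HasFDerivAt f (fderiv ℝ f (x, y)) (x, y) :=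
    ((hf.differentiableOn hn).differentiableAt (hU.mem_nhds hz)).hasFDerivAt
  have hl : HasDerivAt (fun t : ℝ => (t, y)) ((1 : ℝ), (0 : ℝ)) x :=
    (hasDerivAt_id x).prodMk (hasDerivAt_const x y)
  have h := hd.comp_hasDerivAt x hl
  have h2 : pdx f (x, y) = fderiv ℝ f (x, y) (1, 0) := h.deriv
  refine ⟨?_, h2⟩
  rw [h2]; exact h

/-- On an open set, `pdy` is the Fréchet derivative in direction `(0,1)`. -/
lemma pdy_hasDerivAt {f : ℝ × ℝ → ℝ} {U : Set (ℝ × ℝ)} (hU : IsOpen U) {n : WithTop ℕ∞}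
    (hn : n ≠ 0) (hf : ContDiffOn ℝ n f U) {x y : ℝ} (hz : (x, y) ∈ U) :
    HasDerivAt (fun t => f (x, t)) (pdy f (x, y)) y ∧ pdy f (x, y) = fderiv ℝ f (x, y) (0, 1) := by
  have hd : HasFDerivAt f (fderiv ℝ f (x, y)) (x, y) :=
    ((hf.differentiableOn hn).differentiableAt (hU.mem_nhds hz)).hasFDerivAt
  have hl : HasDerivAt (fun t : ℝ => (x, t)) ((0 : ℝ), (1 : ℝ)) y :=
    (hasDerivAt_const y x).prodMk (hasDerivAt_id y)
  have h := hd.comp_hasDerivAt y hl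
  have h2 : pdy f (x, y) = fderiv ℝ f (x, y) (0, 1) := h.deriv
  refine ⟨?_, h2⟩
  rw [h2]; exact h

lemma pdx_contDiffOn {f : ℝ × ℝ → ℝ} {U : Set (ℝ × ℝ)} (hU : IsOpen U) {n m : WithTop ℕ∞}
    (hn : m + 1 ≤ n) (hf : ContDiffOn ℝ n f U) : ContDiffOn ℝ m (pdx f) U := by
  have h : ContDiffOn ℝ m (fun z => fderiv ℝ f z (1, 0)) U :=
    (hf.fderiv_of_isOpen hU hn).clm_apply contDiffOn_const
  refine h.congr fun z hz => ?_
  have hn0 : n ≠ 0 := by rintro rfl; simp at hn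
  exact (pdx_hasDerivAt hU hn0 hf (x := z.1) (y := z.2) hz).2

lemma pdy_contDiffOn {f : ℝ × ℝ → ℝ} {U : Set (ℝ × ℝ)} (hU : IsOpen U) {n m : WithTop ℕ∞}
    (hn : m + 1 ≤ n) (hf : ContDiffOn ℝ n f U) : ContDiffOn ℝ m (pdy f) U := by
  have h : ContDiffOn ℝ m (fun z => fderiv ℝ f z (0, 1)) U :=
    (hf.fderiv_of_isOpen hU hn).clm_apply contDiffOn_const
  refine h.congr fun z hz => ?_
  have hn0 : n ≠ 0 := by rintro rfl; simp at hn
  exact (pdy_hasDerivAt hU hn0 hf (x := z.1) (y := z.2) hz).2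

/-- Cauchy-Schwarz against the constant function. -/
lemma sq_integral_abs_le {α : Type*} [MeasurableSpace α] (μ : Measure α) [IsFiniteMeasure μ]
    (f : α → ℝ) (h1 : Integrable f μ) (h2 : Integrable (fun x => f x ^ 2) μ) :
    (∫ x, |f x| ∂μ) ^ 2 ≤ μ.real Set.univ * ∫ x, f x ^ 2 ∂μ := by
  set I := ∫ x, |f x| ∂μ with hI
  set J := ∫ x, f x ^ 2 ∂μ with hJ
  set m := μ.real Set.univ with hm
  have key : ∀ c : ℝ, 0 ≤ J - 2 * c * I + c ^ 2 * m := by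
    intro c
    have h : 0 ≤ ∫ x, (|f x| - c) ^ 2 ∂μ := integral_nonneg fun x => sq_nonneg _
    have e : ∫ x, (|f x| - c) ^ 2 ∂μ = J - 2 * c * I + c ^ 2 * m := by
      have : ∀ x, (|f x| - c) ^ 2 = f x ^ 2 - 2 * c * |f x| + c ^ 2 := by
        intro x; rw [← sq_abs (f x)]; ring
      simp_rw [this]
      have h3 : Integrable (fun x => 2 * c * |f x|) μ := h1.abs.const_mul _
      have h4 : Integrable (fun x => f x ^ 2 - 2 * c * |f x|) μ := h2.sub h3
      rw [integral_add h4 (integrable_const _),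
        integral_sub h2 h3, integral_const_mul, integral_const]
      simp [hm, hI, hJ, mul_comm]
    rwa [e] at h
  have hm0 : 0 ≤ m := measureReal_nonneg
  have hd := discrim_le_zero (a := m) (b := -2 * I) (c := J) (fun c => by
    have := key c; nlinarith)
  unfold discrim at hd
  nlinarith

lemma abs_sub_le_integral {a b : ℝ} {f f' : ℝ → ℝ}
    (hf : ∀ x ∈ Set.Icc a b, HasDerivAt f (f' x) x) (hc : ContinuousOn f' (Set.Icc a b))
    {s t : ℝ} (hs : s ∈ Set.Icc a b) (ht : t ∈ Set.Icc a b) :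
    |f t - f s| ≤ ∫ x in Set.Icc a b, |f' x| := by
  have hsub : Set.uIcc s t ⊆ Set.Icc a b := Set.uIcc_subset_Icc hs ht
  have h := intervalIntegral.integral_eq_sub_of_hasDerivAt (fun x hx => hf x (hsub hx))
    ((hc.mono hsub).intervalIntegrable)
  rw [← h, ← Real.norm_eq_abs]
  refine (intervalIntegral.norm_integral_le_integral_norm_uIoc).trans ?_
  refine setIntegral_mono_set (hc.abs.integrableOn_Icc) ?_ ?_
  · exact Filter.Eventually.of_forall fun x => abs_nonneg _
  · exact (Set.uIoc_subset_uIcc.trans hsub).eventuallyLE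

lemma abs_le_of_deriv {a h M : ℝ} (hh : 0 < h) {g g' : ℝ → ℝ}
    (hg : ∀ x ∈ Set.Icc a (a + h), HasDerivAt g (g' x) x)
    (hb : ∀ x ∈ Set.Icc a (a + h), |g' x| ≤ M) (h0 : g a = 0)
    {t : ℝ} (ht : t ∈ Set.Icc a (a + h)) : |g t| ≤ M * h := by
  have ha : a ∈ Set.Icc a (a + h) := ⟨le_rfl, by linarith⟩
  have := (convex_Icc a (a + h)).norm_image_sub_le_of_norm_hasDerivWithin_le
    (fun x hx => (hg x hx).hasDerivWithinAt) hb ha ht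
  rw [h0, sub_zero] at this
  have hM : 0 ≤ M := (abs_nonneg _).trans (hb a ha)
  refine this.trans (mul_le_mul_of_nonneg_left ?_ hM)
  rw [Real.norm_eq_abs, abs_of_nonneg (by linarith [ht.1])]
  linarith [ht.2]

/-- One-dimensional differentiation formula, exact on quadratics. -/
lemma fd_bound {a h θ β γ : ℝ} (hh : 0 < h) (hθ0 : 0 ≤ θ) (hθ1 : θ ≤ 1)
    (e1 : β / 2 + γ = 1) (e2 : β / 4 + γ = 2 * θ) (hβ : |β| ≤ 4) (hγ : |γ| ≤ 3)
    {f f1 f2 f3 : ℝ → ℝ}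
    (h1 : ∀ x ∈ Set.Icc a (a + h), HasDerivAt f (f1 x) x)
    (h2 : ∀ x ∈ Set.Icc a (a + h), HasDerivAt f1 (f2 x) x)
    (h3 : ∀ x ∈ Set.Icc a (a + h), HasDerivAt f2 (f3 x) x)
    (hc : ContinuousOn f3 (Set.Icc a (a + h))) :
    |f1 (a + θ * h) - (β * (f (a + h / 2) - f a) + γ * (f (a + h) - f a)) / h| ≤
      8 * h * ∫ x in Set.Icc a (a + h), |f3 x| := by
  set M := ∫ x in Set.Icc a (a + h), |f3 x| with hM
  have ha : a ∈ Set.Icc a (a + h) := ⟨le_rfl, by linarith⟩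
  have hmid : a + h / 2 ∈ Set.Icc a (a + h) := ⟨by linarith, by linarith⟩
  have hend : a + h ∈ Set.Icc a (a + h) := ⟨by linarith, by linarith⟩
  have hth : a + θ * h ∈ Set.Icc a (a + h) := ⟨by nlinarith, by nlinarith⟩
  have b2 : ∀ x ∈ Set.Icc a (a + h), |f2 x - f2 a| ≤ M := fun x hx =>
    abs_sub_le_integral h3 hc ha hx
  have b1 : ∀ x ∈ Set.Icc a (a + h), |f1 x - f1 a - f2 a * (x - a)| ≤ M * h := fun x hx => by
    refine abs_le_of_deriv (g := fun x => f1 x - f1 a - f2 a * (x - a)) hh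
      (fun x hx => ?_) b2 (by simp) hx
    have := ((h2 x hx).sub_const (f1 a)).sub (((hasDerivAt_id x).sub_const a).const_mul (f2 a))
    exact this.congr_deriv (by simp)
  have b0 : ∀ x ∈ Set.Icc a (a + h),
      |f x - f a - f1 a * (x - a) - f2 a * (x - a) ^ 2 / 2| ≤ M * h * h := fun x hx => by
    refine abs_le_of_deriv (g := fun x => f x - f a - f1 a * (x - a) - f2 a * (x - a) ^ 2 / 2) hh
      (fun x hx => ?_) b1 (by simp) hx
    have := (((h1 x hx).sub_const (f a)).sub
      (((hasDerivAt_id x).sub_const a).const_mul (f1 a))).sub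
      (((((hasDerivAt_id x).sub_const a).pow 2).const_mul (f2 a)).div_const 2)
    refine this.congr_deriv ?_
    simp; ring
  have A := b1 _ hth
  have B := b0 _ hmid
  have D := b0 _ hend
  set G1 := f1 (a + θ * h) - f1 a - f2 a * (a + θ * h - a) with hG1
  set GB := f (a + h / 2) - f a - f1 a * (a + h / 2 - a) - f2 a * (a + h / 2 - a) ^ 2 / 2 with hGB
  set GD := f (a + h) - f a - f1 a * (a + h - a) - f2 a * (a + h - a) ^ 2 / 2 with hGD
  have hb : β = 4 - 8 * θ := by linarith
  have hg : γ = 4 * θ - 1 := by linarith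
  have e : f1 (a + θ * h) - (β * (f (a + h / 2) - f a) + γ * (f (a + h) - f a)) / h
      = G1 - (β * GB + γ * GD) / h := by
    rw [hG1, hGB, hGD, hb, hg]; field_simp; ring
  rw [e]
  have hMh : 0 ≤ M * h * h := (abs_nonneg _).trans B
  have k : |(β * GB + γ * GD) / h| ≤ 7 * M * h := by
    rw [abs_div, abs_of_pos hh, div_le_iff₀ hh]
    calc |β * GB + γ * GD| ≤ |β| * |GB| + |γ| * |GD| := by
          rw [← abs_mul, ← abs_mul]; exact abs_add_le _ _
      _ ≤ 4 * (M * h * h) + 3 * (M * h * h) := by gcongr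
      _ = _ := by ring
  calc _ ≤ |G1| + |(β * GB + γ * GD) / h| := abs_sub _ _
    _ ≤ _ := by linarith

/-- One-dimensional quadratic interpolation error. -/
lemma interp_bound {a h : ℝ} (hh : 0 < h) {f f1 f2 : ℝ → ℝ} (c0 c1 c2 : ℝ)
    (h1 : ∀ x ∈ Set.Icc a (a + h), HasDerivAt f (f1 x) x)
    (h2 : ∀ x ∈ Set.Icc a (a + h), HasDerivAt f1 (f2 x) x)
    (hc : ContinuousOn f2 (Set.Icc a (a + h)))
    (n0 : c0 + c1 * a + c2 * a ^ 2 = f a)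
    (n1 : c0 + c1 * (a + h / 2) + c2 * (a + h / 2) ^ 2 = f (a + h / 2))
    (n2 : c0 + c1 * (a + h) + c2 * (a + h) ^ 2 = f (a + h))
    {y : ℝ} (hy : y ∈ Set.Icc a (a + h)) :
    |f y - (c0 + c1 * y + c2 * y ^ 2)| ≤ 4 * h * ∫ x in Set.Icc a (a + h), |f2 x| := by
  set M := ∫ x in Set.Icc a (a + h), |f2 x| with hM
  have ha : a ∈ Set.Icc a (a + h) := ⟨le_rfl, by linarith⟩
  have hmid : a + h / 2 ∈ Set.Icc a (a + h) := ⟨by linarith, by linarith⟩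
  have hend : a + h ∈ Set.Icc a (a + h) := ⟨by linarith, by linarith⟩
  have b1 : ∀ x ∈ Set.Icc a (a + h), |f1 x - f1 a| ≤ M := fun x hx =>
    abs_sub_le_integral h2 hc ha hx
  have b0 : ∀ x ∈ Set.Icc a (a + h), |f x - f a - f1 a * (x - a)| ≤ M * h := fun x hx => by
    refine abs_le_of_deriv (g := fun x => f x - f a - f1 a * (x - a)) hh
      (fun x hx => ?_) b1 (by simp) hx
    have := ((h1 x hx).sub_const (f a)).sub (((hasDerivAt_id x).sub_const a).const_mul (f1 a))
    exact this.congr_deriv (by simp)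
  have A := b0 y hy
  have B := b0 _ hmid
  have D := b0 _ hend
  set GA := f y - f a - f1 a * (y - a) with hGA
  set GB := f (a + h / 2) - f a - f1 a * (a + h / 2 - a) with hGB
  set GD := f (a + h) - f a - f1 a * (a + h - a) with hGD
  obtain ⟨t, rfl⟩ : ∃ t, y = a + t * h := ⟨(y - a) / h, by field_simp; ring⟩
  have t0 : 0 ≤ t := by
    have := hy.1; by_contra hcon; push Not at hcon; nlinarith
  have t1 : t ≤ 1 := by
    have := hy.2; by_contra hcon; push Not at hcon; nlinarith
  have e : f (a + t * h) - (c0 + c1 * (a + t * h) + c2 * (a + t * h) ^ 2)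
      = GA - (4 * t * (1 - t) * GB + t * (2 * t - 1) * GD) := by
    rw [hGA, hGB, hGD, ← n0, ← n1, ← n2]; ring
  rw [e]
  have hb : |4 * t * (1 - t)| ≤ 1 := by
    rw [abs_le]; constructor <;> nlinarith [sq_nonneg (2 * t - 1)]
  have hd : |t * (2 * t - 1)| ≤ 1 := by
    rw [abs_le]; constructor <;> nlinarith [sq_nonneg (2 * t - 1)]
  have hMh : 0 ≤ M * h := (abs_nonneg _).trans B
  have k : |4 * t * (1 - t) * GB + t * (2 * t - 1) * GD| ≤ 1 * (M * h) + 1 * (M * h) := by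
    calc _ ≤ |4 * t * (1 - t)| * |GB| + |t * (2 * t - 1)| * |GD| := by
          rw [← abs_mul, ← abs_mul]; exact abs_add_le _ _
      _ ≤ _ := by gcongr
  calc _ ≤ |GA| + |4 * t * (1 - t) * GB + t * (2 * t - 1) * GD| := abs_sub _ _
    _ ≤ _ := by linarith

set_option maxHeartbeats 1000000 in
lemma edge_bound {a₁ a₂ hx hy θ β γ : ℝ} (hhx : 0 < hx) (hhy : 0 < hy)
    (hθ0 : 0 ≤ θ) (hθ1 : θ ≤ 1)
    (e1 : β / 2 + γ = 1) (e2 : β / 4 + γ = 2 * θ) (hβ : |β| ≤ 4) (hγ : |γ| ≤ 3)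
    {v : ℝ × ℝ → ℝ} {U : Set (ℝ × ℝ)} (hU : IsOpen U)
    (hT : Set.Icc (a₁, a₂) (a₁ + hx, a₂ + hy) ⊆ U) (hv : ContDiffOn ℝ 3 v U)
    (co : Fin 3 → Fin 3 → ℝ) {q : ℝ × ℝ → ℝ}
    (hq : q = fun z => ∑ i : Fin 3, ∑ j : Fin 3, co i j * z.1 ^ (i : ℕ) * z.2 ^ (j : ℕ))
    (hn : ∀ i j : Fin 3,
      q (a₁ + (i : ℕ) * hx / 2, a₂ + (j : ℕ) * hy / 2) =
        v (a₁ + (i : ℕ) * hx / 2, a₂ + (j : ℕ) * hy / 2)) :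
    IntegrableOn (fun y => (pdx (fun z => v z - q z) (a₁ + θ * hx, y)) ^ 2)
      (Set.Icc a₂ (a₂ + hy)) ∧
    ∫ y in Set.Icc a₂ (a₂ + hy), (pdx (fun z => v z - q z) (a₁ + θ * hx, y)) ^ 2 ≤
      128 * hx ^ 3 * (∫ z in Set.Icc (a₁, a₂) (a₁ + hx, a₂ + hy), (Dm (3, 0) v z) ^ 2) +
      1568 * (hy ^ 4 / hx) *
        (∫ z in Set.Icc (a₁, a₂) (a₁ + hx, a₂ + hy), (Dm (1, 2) v z) ^ 2) := by
  have hTp : Set.Icc (a₁, a₂) (a₁ + hx, a₂ + hy) =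
      Set.Icc a₁ (a₁ + hx) ×ˢ Set.Icc a₂ (a₂ + hy) := by rw [Set.Icc_prod_Icc]
  rw [hTp] at hT ⊢
  have hmem : ∀ x ∈ Set.Icc a₁ (a₁ + hx), ∀ y ∈ Set.Icc a₂ (a₂ + hy), (x, y) ∈ U :=
    fun x hx y hy => hT ⟨hx, hy⟩
  have vx : ContDiffOn ℝ 2 (pdx v) U := pdx_contDiffOn hU (by norm_num) hv
  have vxx : ContDiffOn ℝ 1 (pdx (pdx v)) U := pdx_contDiffOn hU (by norm_num) vx
  have vxxx : ContDiffOn ℝ 0 (pdx (pdx (pdx v))) U := pdx_contDiffOn hU (by norm_num) vxx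
  have vy : ContDiffOn ℝ 2 (pdy v) U := pdy_contDiffOn hU (by norm_num) hv
  have vyy : ContDiffOn ℝ 1 (pdy (pdy v)) U := pdy_contDiffOn hU (by norm_num) vy
  have vyyx : ContDiffOn ℝ 0 (pdx (pdy (pdy v))) U := pdx_contDiffOn hU (by norm_num) vyy
  have d30 : Dm (3, 0) v = pdx (pdx (pdx v)) := rfl
  have d12 : Dm (1, 2) v = pdx (pdy (pdy v)) := rfl
  rw [d30, d12]
  set F := pdx (pdx (pdx v)) with hF
  set G := pdx (pdy (pdy v)) with hG
  set X := Set.Icc a₁ (a₁ + hx) with hX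
  set Y := Set.Icc a₂ (a₂ + hy) with hY
  have Fc : ContinuousOn F (X ×ˢ Y) := vxxx.continuousOn.mono hT
  have Gc : ContinuousOn G (X ×ˢ Y) := vyyx.continuousOn.mono hT
  have hcomp : IsCompact (X ×ˢ Y) := isCompact_Icc.prod isCompact_Icc
  have hm0 : a₁ ∈ X := ⟨le_rfl, by linarith⟩
  have hm1 : a₁ + hx / 2 ∈ X := ⟨by linarith, by linarith⟩
  have hm2 : a₁ + hx ∈ X := ⟨by linarith, by linarith⟩
  have hmθ : a₁ + θ * hx ∈ X := ⟨by nlinarith, by nlinarith⟩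
  have hl0 : a₂ ∈ Y := ⟨le_rfl, by linarith⟩
  have secx : ∀ (H : ℝ × ℝ → ℝ), ContinuousOn H (X ×ˢ Y) → ∀ y ∈ Y,
      ContinuousOn (fun x => H (x, y)) X := fun H hH y hy =>
    hH.comp (by fun_prop) (fun x hx => ⟨hx, hy⟩)
  have secy : ∀ (H : ℝ × ℝ → ℝ), ContinuousOn H (X ×ˢ Y) → ∀ x ∈ X,
      ContinuousOn (fun y => H (x, y)) Y := fun H hH x hx =>
    hH.comp (by fun_prop) (fun y hy => ⟨hx, hy⟩)
  have fub : ∀ (H : ℝ × ℝ → ℝ), ContinuousOn H (X ×ˢ Y) →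
      IntegrableOn (fun y => ∫ x in X, H (x, y)) Y ∧
      ∫ y in Y, ∫ x in X, H (x, y) = ∫ z in X ×ˢ Y, H z := by
    intro H hH
    have hi : IntegrableOn H (X ×ˢ Y) := hH.integrableOn_compact hcomp
    have hi' : Integrable H ((volume.restrict X).prod (volume.restrict Y)) := by
      rw [Measure.prod_restrict, ← Measure.volume_eq_prod]; exact hi
    refine ⟨hi'.integral_prod_right, ?_⟩
    rw [Measure.volume_eq_prod, ← Measure.prod_restrict]
    exact (integral_prod_symm H hi').symm
  set c : Fin 3 → ℝ := fun j => co 1 j + 2 * (a₁ + θ * hx) * co 2 j with hcdef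
  have hqd : ∀ y, HasDerivAt (fun t => q (t, y)) (c 0 + c 1 * y + c 2 * y ^ 2) (a₁ + θ * hx) := by
    intro y
    have e : (fun t => q (t, y)) = fun t => (co 0 0 + co 0 1 * y + co 0 2 * y ^ 2) +
        (co 1 0 + co 1 1 * y + co 1 2 * y ^ 2) * t +
        (co 2 0 + co 2 1 * y + co 2 2 * y ^ 2) * t ^ 2 := by
      funext t; rw [hq]; simp [Fin.sum_univ_three]; ring
    rw [e]
    have := (((hasDerivAt_id (a₁ + θ * hx)).const_mul
      (co 1 0 + co 1 1 * y + co 1 2 * y ^ 2)).const_add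
      (co 0 0 + co 0 1 * y + co 0 2 * y ^ 2)).add
      (((hasDerivAt_id (a₁ + θ * hx)).pow 2).const_mul (co 2 0 + co 2 1 * y + co 2 2 * y ^ 2))
    refine this.congr_deriv ?_
    simp [hcdef]; ring
  have hb' : β = 4 - 8 * θ := by linarith
  have hg' : γ = 4 * θ - 1 := by linarith
  have hqf : ∀ y, c 0 + c 1 * y + c 2 * y ^ 2 =
      (β * (q (a₁ + hx / 2, y) - q (a₁, y)) + γ * (q (a₁ + hx, y) - q (a₁, y))) / hx := by
    intro y
    rw [hq, hb', hg']
    simp only [Fin.sum_univ_three, hcdef]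
    simp
    field_simp
    ring
  have hE : ∀ y ∈ Y, pdx (fun z => v z - q z) (a₁ + θ * hx, y) =
      pdx v (a₁ + θ * hx, y) - (c 0 + c 1 * y + c 2 * y ^ 2) := fun y hy' =>
    (((pdx_hasDerivAt hU (by norm_num) hv (hmem _ hmθ y hy')).1).sub (hqd y)).deriv
  set φ : ℝ → ℝ := fun y =>
    (β * (v (a₁ + hx / 2, y) - v (a₁, y)) + γ * (v (a₁ + hx, y) - v (a₁, y))) / hx with hφ
  set φ1 : ℝ → ℝ := fun y =>
    (β * (pdy v (a₁ + hx / 2, y) - pdy v (a₁, y)) +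
      γ * (pdy v (a₁ + hx, y) - pdy v (a₁, y))) / hx with hφ1
  set φ2 : ℝ → ℝ := fun y =>
    (β * (pdy (pdy v) (a₁ + hx / 2, y) - pdy (pdy v) (a₁, y)) +
      γ * (pdy (pdy v) (a₁ + hx, y) - pdy (pdy v) (a₁, y))) / hx with hφ2
  have hφd : ∀ y ∈ Y, HasDerivAt φ (φ1 y) y := fun y hy' => by
    have k := fun x (hx : x ∈ X) =>
      (pdy_hasDerivAt hU (by norm_num) hv (hmem x hx y hy')).1
    exact ((((k _ hm1).sub (k _ hm0)).const_mul β).add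
      (((k _ hm2).sub (k _ hm0)).const_mul γ)).div_const hx
  have hφd1 : ∀ y ∈ Y, HasDerivAt φ1 (φ2 y) y := fun y hy' => by
    have k := fun x (hx : x ∈ X) =>
      (pdy_hasDerivAt hU (by norm_num) vy (hmem x hx y hy')).1
    exact ((((k _ hm1).sub (k _ hm0)).const_mul β).add
      (((k _ hm2).sub (k _ hm0)).const_mul γ)).div_const hx
  have hφc : ContinuousOn φ2 Y := by
    have k := fun x (hx : x ∈ X) => secy _ (vyy.continuousOn.mono hT) x hx
    exact ((((k _ hm1).sub (k _ hm0)).const_mul β).add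
      (((k _ hm2).sub (k _ hm0)).const_mul γ)).div_const hx
  have hφ2b : ∀ y ∈ Y, |φ2 y| ≤ 7 / hx * ∫ x in X, |G (x, y)| := fun y hy' => by
    have k := fun x (hx : x ∈ X) => abs_sub_le_integral (f := fun x => pdy (pdy v) (x, y))
      (fun x hx => (pdx_hasDerivAt hU (by norm_num) vyy (hmem x hx y hy')).1)
      (secx _ Gc y hy') hm0 hx
    have k1 := k _ hm1
    have k2 := k _ hm2
    rw [hφ2]
    simp only
    rw [abs_div, abs_of_pos hhx, div_le_iff₀ hhx]
    set I := ∫ x in X, |G (x, y)| with hI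
    calc _ ≤ |β| * |pdy (pdy v) (a₁ + hx / 2, y) - pdy (pdy v) (a₁, y)| +
          |γ| * |pdy (pdy v) (a₁ + hx, y) - pdy (pdy v) (a₁, y)| := by
          rw [← abs_mul, ← abs_mul]; exact abs_add_le _ _
      _ ≤ 4 * I + 3 * I := by gcongr
      _ = _ := by field_simp; ring
  have hnode : ∀ j : Fin 3, c 0 + c 1 * (a₂ + (j : ℕ) * hy / 2) +
      c 2 * (a₂ + (j : ℕ) * hy / 2) ^ 2 = φ (a₂ + (j : ℕ) * hy / 2) := by
    intro j
    rw [hqf, hφ]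
    have n0 := hn 0 j
    have n1 := hn 1 j
    have n2 := hn 2 j
    have x1 : a₁ + ((1 : Fin 3) : ℕ) * hx / 2 = a₁ + hx / 2 := by simp
    have x2 : a₁ + ((2 : Fin 3) : ℕ) * hx / 2 = a₁ + hx := by simp
    have x0 : a₁ + ((0 : Fin 3) : ℕ) * hx / 2 = a₁ := by simp
    rw [x0] at n0; rw [x1] at n1; rw [x2] at n2
    simp only [n0, n1, n2]
  set KK := ∫ z in X ×ˢ Y, |G z| with hKK
  have hφint : ∫ y in Y, |φ2 y| ≤ 7 / hx * KK := by
    have hf := fub (fun z => |G z|) Gc.abs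
    rw [hKK, ← hf.2, ← integral_const_mul]
    exact setIntegral_mono_on hφc.abs.integrableOn_Icc (hf.1.const_mul _) measurableSet_Icc hφ2b
  set N := ∫ z in X ×ˢ Y, G z ^ 2 with hN
  have hfin : IsFiniteMeasure (volume.restrict (X ×ˢ Y)) :=
    ⟨by rw [Measure.restrict_apply_univ]; exact hcomp.measure_lt_top⟩
  have hKKN : KK ^ 2 ≤ hx * hy * N := by
    have := sq_integral_abs_le (volume.restrict (X ×ˢ Y)) G (Gc.integrableOn_compact hcomp)
      ((Gc.pow 2).integrableOn_compact hcomp)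
    have hvol : (volume.restrict (X ×ˢ Y)).real Set.univ = hx * hy := by
      rw [measureReal_restrict_apply_univ, Measure.volume_eq_prod, measureReal_prod_prod, hX, hY,
        Real.volume_real_Icc, Real.volume_real_Icc]
      rw [max_eq_left (by linarith), max_eq_left (by linarith)]; ring
    rwa [hvol] at this
  have hpt : ∀ y ∈ Y, (pdx (fun z => v z - q z) (a₁ + θ * hx, y)) ^ 2 ≤
      128 * hx ^ 3 * (∫ x in X, F (x, y) ^ 2) + 1568 * (hy ^ 3 / hx) * N := by
    intro y hy'
    rw [hE y hy']
    have A := fd_bound hhx hθ0 hθ1 e1 e2 hβ hγ (f := fun x => v (x, y))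
      (f1 := fun x => pdx v (x, y)) (f2 := fun x => pdx (pdx v) (x, y)) (f3 := fun x => F (x, y))
      (fun x hx => (pdx_hasDerivAt hU (by norm_num) hv (hmem x hx y hy')).1)
      (fun x hx => (pdx_hasDerivAt hU (by norm_num) vx (hmem x hx y hy')).1)
      (fun x hx => (pdx_hasDerivAt hU (by norm_num) vxx (hmem x hx y hy')).1)
      (secx _ Fc y hy')
    have B := interp_bound hhy (c 0) (c 1) (c 2) hφd hφd1 hφc
      (by simpa using hnode 0) (by simpa using hnode 1) (by simpa using hnode 2) hy'
    have Jb := sq_integral_abs_le (volume.restrict X) (fun x => F (x, y))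
      ((secx _ Fc y hy').integrableOn_Icc) (((secx _ Fc y hy').pow 2).integrableOn_Icc)
    have hvol : (volume.restrict X).real Set.univ = hx := by
      rw [measureReal_restrict_apply_univ, hX, Real.volume_real_Icc, max_eq_left (by linarith)]
      ring
    rw [hvol] at Jb
    have B' : |φ y - (c 0 + c 1 * y + c 2 * y ^ 2)| ≤ 4 * hy * (7 / hx * KK) :=
      B.trans (by gcongr)
    change |pdx v (a₁ + θ * hx, y) - φ y| ≤ 8 * hx * ∫ x in X, |F (x, y)| at A
    set P := pdx v (a₁ + θ * hx, y) - φ y with hP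
    set Q := φ y - (c 0 + c 1 * y + c 2 * y ^ 2) with hQ
    set J := ∫ x in X, |F (x, y)| with hJ
    have e : pdx v (a₁ + θ * hx, y) - (c 0 + c 1 * y + c 2 * y ^ 2) = P + Q := by
      rw [hP, hQ]; ring
    rw [e]
    have P2 : P ^ 2 ≤ (8 * hx * J) ^ 2 := by
      rw [← sq_abs P]; gcongr
    have Q2 : Q ^ 2 ≤ (4 * hy * (7 / hx * KK)) ^ 2 := by
      rw [← sq_abs Q]; gcongr
    calc (P + Q) ^ 2 ≤ 2 * P ^ 2 + 2 * Q ^ 2 := by nlinarith [sq_nonneg (P - Q)]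
      _ ≤ 2 * (8 * hx * J) ^ 2 + 2 * (4 * hy * (7 / hx * KK)) ^ 2 := by linarith
      _ = 128 * hx ^ 2 * J ^ 2 + 1568 * (hy ^ 2 / hx ^ 2) * KK ^ 2 := by field_simp; ring
      _ ≤ 128 * hx ^ 2 * (hx * ∫ x in X, F (x, y) ^ 2) +
          1568 * (hy ^ 2 / hx ^ 2) * (hx * hy * N) := by gcongr
      _ = _ := by field_simp
  have hint : IntegrableOn (fun y => (pdx (fun z => v z - q z) (a₁ + θ * hx, y)) ^ 2) Y := by
    refine ContinuousOn.integrableOn_Icc (ContinuousOn.pow ?_ 2)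
    have : ContinuousOn (fun y => pdx v (a₁ + θ * hx, y) - (c 0 + c 1 * y + c 2 * y ^ 2)) Y :=
      (secy _ (vx.continuousOn.mono hT) _ hmθ).sub (by fun_prop)
    exact this.congr hE
  refine ⟨hint, ?_⟩
  have hf := fub (fun z => F z ^ 2) (Fc.pow 2)
  have hconst : IntegrableOn (fun _ : ℝ => 1568 * (hy ^ 3 / hx) * N) Y :=
    continuousOn_const.integrableOn_Icc
  refine (setIntegral_mono_on hint ((hf.1.const_mul (128 * hx ^ 3)).add hconst)
    measurableSet_Icc hpt).trans ?_
  rw [integral_add' (hf.1.const_mul (128 * hx ^ 3)) hconst, integral_const_mul, hf.2,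
    setIntegral_const, hY, Real.volume_real_Icc, max_eq_left (by linarith)]
  apply le_of_eq
  simp only [smul_eq_mul]
  field_simp
  ring

/-- trace estimate for the `x`-derivative of the biquadratic nodal
interpolation error on the two edges of `T = [a₁, a₁+h_x] × [a₂, a₂+h_y]` parallel
to the `y`-axis. -/
theorem biquadratic_trace_estimate :
    ∃ C : ℝ, 0 < C ∧
      ∀ (a₁ a₂ hx hy : ℝ), 0 < hx → 0 < hy →
      ∀ (v : ℝ × ℝ → ℝ) (U : Set (ℝ × ℝ)), IsOpen U →
        Set.Icc (a₁, a₂) (a₁ + hx, a₂ + hy) ⊆ U → ContDiffOn ℝ 3 v U →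
      ∀ q : ℝ × ℝ → ℝ,
        (∃ co : Fin 3 → Fin 3 → ℝ,
          q = fun z => ∑ i : Fin 3, ∑ j : Fin 3, co i j * z.1 ^ (i : ℕ) * z.2 ^ (j : ℕ)) →
        (∀ i j : Fin 3,
          q (a₁ + (i : ℕ) * hx / 2, a₂ + (j : ℕ) * hy / 2) =
            v (a₁ + (i : ℕ) * hx / 2, a₂ + (j : ℕ) * hy / 2)) →
        Real.sqrt (∫ y in Set.Icc a₂ (a₂ + hy),
            ((pdx (fun z => v z - q z) (a₁, y)) ^ 2 +
              (pdx (fun z => v z - q z) (a₁ + hx, y)) ^ 2)) ≤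
          C * (hx * Real.sqrt hx * L2R (Set.Icc (a₁, a₂) (a₁ + hx, a₂ + hy)) (Dm (3, 0) v) +
            Real.sqrt hx * hy * L2R (Set.Icc (a₁, a₂) (a₁ + hx, a₂ + hy)) (Dm (2, 1) v) +
            hy ^ 2 / Real.sqrt hx * L2R (Set.Icc (a₁, a₂) (a₁ + hx, a₂ + hy)) (Dm (1, 2) v)) := by
  refine ⟨56, by norm_num, ?_⟩
  intro a₁ a₂ hx hy hhx hhy v U hU hT hv q ⟨co, hq⟩ hn
  have L := edge_bound (θ := 0) (β := 4) (γ := -1) hhx hhy (by norm_num) (by norm_num)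
    (by norm_num) (by norm_num) (by norm_num) (by norm_num) hU hT hv co hq hn
  have R := edge_bound (θ := 1) (β := -4) (γ := 3) hhx hhy (by norm_num) (by norm_num)
    (by norm_num) (by norm_num) (by norm_num) (by norm_num) hU hT hv co hq hn
  simp only [zero_mul, add_zero, one_mul] at L R
  rw [integral_add L.1 R.1]
  unfold L2R
  set N3 := ∫ z in Set.Icc (a₁, a₂) (a₁ + hx, a₂ + hy), (Dm (3, 0) v z) ^ 2 with hN3
  set N2 := ∫ z in Set.Icc (a₁, a₂) (a₁ + hx, a₂ + hy), (Dm (2, 1) v z) ^ 2 with hN2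
  set N1 := ∫ z in Set.Icc (a₁, a₂) (a₁ + hx, a₂ + hy), (Dm (1, 2) v z) ^ 2 with hN1
  have p3 : 0 ≤ N3 := integral_nonneg fun _ => sq_nonneg _
  have p1 : 0 ≤ N1 := integral_nonneg fun _ => sq_nonneg _
  have hs : 0 < Real.sqrt hx := Real.sqrt_pos.2 hhx
  have q3 : (hx * Real.sqrt hx * Real.sqrt N3) ^ 2 = hx ^ 3 * N3 := by
    rw [mul_pow, mul_pow, Real.sq_sqrt p3, Real.sq_sqrt hhx.le]; ring
  have q1 : (hy ^ 2 / Real.sqrt hx * Real.sqrt N1) ^ 2 = hy ^ 4 / hx * N1 := by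
    rw [mul_pow, div_pow, Real.sq_sqrt p1, Real.sq_sqrt hhx.le]; ring
  have r3 : 0 ≤ hx * Real.sqrt hx * Real.sqrt N3 := by positivity
  have r2 : 0 ≤ Real.sqrt hx * hy * Real.sqrt N2 := by positivity
  have r1 : 0 ≤ hy ^ 2 / Real.sqrt hx * Real.sqrt N1 := by positivity
  have m3 : 0 ≤ hx ^ 3 * N3 := by positivity
  set A := hx * Real.sqrt hx * Real.sqrt N3 with hA
  set B := Real.sqrt hx * hy * Real.sqrt N2 with hB
  set D := hy ^ 2 / Real.sqrt hx * Real.sqrt N1 with hD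
  apply Real.sqrt_le_iff.2
  refine ⟨by positivity, ?_⟩
  have hfin : 3136 * (A ^ 2 + D ^ 2) ≤ (56 * (A + B + D)) ^ 2 := by
    have : 0 ≤ A * B + A * D + B * D := by positivity
    nlinarith [sq_nonneg B]
  linarith [L.2, R.2]
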